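/- arXiv:1805.08346 — 9 statements merged into one kernel-verified Lean document; each statement's English description precedes it below -/
import Mathlib

section
/- Let X and Y be metric spaces, u : [0,∞) → X and v : [0,∞) → Y arbitrary functions, and A ⊆ X. Set L⁺(u) = {p ∈ X : there is a sequence tₙ → +∞ with u(tₙ) → p} and L⁺(v) = {p ∈ Y : there is a sequence tₙ → +∞ with v(tₙ) → p}, and let Ω = L⁺(u) ∩ A. Assume Ω ≠ ∅ and that for every sequence (tₙ) in [0,∞) with tₙ → +∞ such that (u(tₙ)) converges to a point of Ω, the sequence (v(tₙ)) converges in Y. Then there exists a continuous map h : Ω → L⁺(v) such that for every q ∈ Ω and every sequence (tₙ) with tₙ → +∞ and u(tₙ) → q, one has v(tₙ) → h(q). -/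
/-!
For a point `q` of `Ω = L⁺(u) ∩ A`, let `F q = atTop ⊓ comap u (𝓝 q)` be the filter on times
describing `t → ∞` with `u t → q`. Interleaving two sequences that tend to `F q` gives a third one,
so the convergence hypothesis forces the limits of `v` along all of them to coincide; call the
common value `h q`. Since `F q` is countably generated, `v` tends to `h q` along the whole filter
`F q`. Continuity of `h` is then the usual argument for extension by continuity into a regular
space: a closed neighbourhood `V` of `h q` contains `v t` for all large `t` with `u t` in an open
neighbourhood `U` of `q`, hence contains `h p` for every `p ∈ U ∩ Ω`.
-/

open Filter Topology
open scoped NNReal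

/-- The positive limit set of a function `w : [0,∞) → Z`. -/
def fLimitSet {Z : Type*} [MetricSpace Z] (w : ℝ≥0 → Z) : Set Z :=
  {p | ∃ t : ℕ → ℝ≥0, Tendsto t atTop atTop ∧
    Tendsto (fun n => w (t n)) atTop (𝓝 p)}

/-- The interleaving `a 0, b 0, a 1, b 1, …` of two sequences. -/
def interleave {α : Type*} (a b : ℕ → α) (n : ℕ) : α :=
  if n % 2 = 0 then a (n / 2) else b (n / 2)

lemma interleave_even {α : Type*} (a b : ℕ → α) (n : ℕ) : interleave a b (2 * n) = a n := by
  simp [interleave]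

lemma interleave_odd {α : Type*} (a b : ℕ → α) (n : ℕ) : interleave a b (2 * n + 1) = b n := by
  have h1 : (2 * n + 1) % 2 = 1 := by omega
  have h2 : (2 * n + 1) / 2 = n := by omega
  simp [interleave, h1, h2]

lemma tendsto_interleave {α : Type*} {F : Filter α} {a b : ℕ → α}
    (ha : Tendsto a atTop F) (hb : Tendsto b atTop F) : Tendsto (interleave a b) atTop F := by
  have hdiv : Tendsto (fun n : ℕ => n / 2) atTop atTop :=
    Nat.tendsto_div_const_atTop two_ne_zero
  intro s hs
  rw [mem_map]
  filter_upwards [(ha.comp hdiv) hs, (hb.comp hdiv) hs] with n h1 h2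
  rw [Set.mem_preimage, interleave]
  split_ifs
  · exact h1
  · exact h2

/-- If `v` converges along every sequence tending to `F`, the limit does not depend on the
sequence: compare both with their interleaving. -/
lemma limit_unique_of_forall_seq {α Y : Type*} [TopologicalSpace Y] [T2Space Y] {F : Filter α}
    {v : α → Y}
    (hF : ∀ t : ℕ → α, Tendsto t atTop F → ∃ y, Tendsto (fun n => v (t n)) atTop (𝓝 y))
    {a b : ℕ → α} (ha : Tendsto a atTop F) (hb : Tendsto b atTop F) {y z : Y}
    (hy : Tendsto (fun n => v (a n)) atTop (𝓝 y))
    (hz : Tendsto (fun n => v (b n)) atTop (𝓝 z)) : y = z := by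
  obtain ⟨w, hw⟩ := hF _ (tendsto_interleave ha hb)
  have hmul : Tendsto (fun n : ℕ => 2 * n) atTop atTop :=
    tendsto_id.const_mul_atTop' two_pos
  have h1 := hw.comp hmul
  have h2 := hw.comp ((tendsto_add_atTop_nat 1).comp hmul)
  simp only [Function.comp_def, interleave_even, interleave_odd] at h1 h2
  exact (tendsto_nhds_unique hy h1).trans (tendsto_nhds_unique h2 hz)

/-- If `Ω = L⁺(u) ∩ A` is nonempty and `v(tₙ)` converges for every sequence
`tₙ → +∞` with `u(tₙ)` converging to a point of `Ω`, then there is a continuous map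
`h : Ω → L⁺(v)` with `v(tₙ) → h(q)` whenever `tₙ → +∞` and `u(tₙ) → q ∈ Ω`. -/
theorem stmt_1 {X Y : Type*} [MetricSpace X] [MetricSpace Y]
    (u : ℝ≥0 → X) (v : ℝ≥0 → Y) (A : Set X)
    (hne : (fLimitSet u ∩ A).Nonempty)
    (hconv : ∀ t : ℕ → ℝ≥0, Tendsto t atTop atTop →
      (∃ p ∈ fLimitSet u ∩ A, Tendsto (fun n => u (t n)) atTop (𝓝 p)) →
      ∃ q : Y, Tendsto (fun n => v (t n)) atTop (𝓝 q)) :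
    ∃ h : X → Y, ContinuousOn h (fLimitSet u ∩ A) ∧
      Set.MapsTo h (fLimitSet u ∩ A) (fLimitSet v) ∧
      ∀ q ∈ fLimitSet u ∩ A, ∀ t : ℕ → ℝ≥0, Tendsto t atTop atTop →
        Tendsto (fun n => u (t n)) atTop (𝓝 q) →
        Tendsto (fun n => v (t n)) atTop (𝓝 (h q)) := by
  have hF : ∀ (q : X) (t : ℕ → ℝ≥0), Tendsto t atTop (atTop ⊓ comap u (𝓝 q)) ↔
      Tendsto t atTop atTop ∧ Tendsto (fun n => u (t n)) atTop (𝓝 q) := by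
    intro q t
    rw [tendsto_inf, tendsto_comap_iff]
    rfl
  have key : ∀ q ∈ fLimitSet u ∩ A, ∃ y, Tendsto v (atTop ⊓ comap u (𝓝 q)) (𝓝 y) := by
    intro q hq
    obtain ⟨t₀, ht₀, hut₀⟩ := hq.1
    have hseq : ∀ t : ℕ → ℝ≥0, Tendsto t atTop (atTop ⊓ comap u (𝓝 q)) →
        ∃ y, Tendsto (fun n => v (t n)) atTop (𝓝 y) := fun t ht =>
      hconv t ((hF q t).1 ht).1 ⟨q, hq, ((hF q t).1 ht).2⟩
    have h₀ := (hF q t₀).2 ⟨ht₀, hut₀⟩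
    obtain ⟨y, hy⟩ := hseq t₀ h₀
    refine ⟨y, tendsto_of_seq_tendsto fun t ht => ?_⟩
    obtain ⟨z, hz⟩ := hseq t ht
    rw [limit_unique_of_forall_seq hseq h₀ ht hy hz]
    exact hz
  -- Off `Ω` the value of `h` is irrelevant; `Y` is nonempty because it contains `v 0`.
  have : Nonempty Y := ⟨v 0⟩
  choose! h hh using key
  have hlim : ∀ q ∈ fLimitSet u ∩ A, ∀ t : ℕ → ℝ≥0, Tendsto t atTop atTop →
      Tendsto (fun n => u (t n)) atTop (𝓝 q) →
      Tendsto (fun n => v (t n)) atTop (𝓝 (h q)) := fun q hq t ht hut =>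
    (hh q hq).comp ((hF q t).2 ⟨ht, hut⟩)
  refine ⟨h, ?_, ?_, hlim⟩
  · intro q hq
    refine ((closed_nhds_basis (h q)).tendsto_right_iff).2 ?_
    rintro V ⟨hV, hVc⟩
    obtain ⟨s, hs, W, hW, hsW⟩ := mem_inf_iff_superset.1 (hh q hq hV)
    obtain ⟨U, hU, hUW⟩ := mem_comap.1 hW
    filter_upwards [mem_nhdsWithin_of_mem_nhds (eventually_mem_nhds_iff.2 hU),
      self_mem_nhdsWithin] with p hpU hp
    obtain ⟨t, ht, hut⟩ := hp.1
    refine hVc.mem_of_tendsto (hlim p hp t ht hut) ?_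
    filter_upwards [ht hs, hut hpU] with n h1 h2
    exact hsW ⟨h1, hUW h2⟩
  · intro q hq
    obtain ⟨t, ht, hut⟩ := hq.1
    exact ⟨t, ht, hlim q hq t ht hut⟩
end

section
/- Let (X,π) and (Y,σ) be semidynamical systems on metric spaces, x ∈ X and y ∈ Y with L⁺(x) ≠ ∅. If y is comparable with x with respect to the set L⁺(x), then there exists a continuous map h : L⁺(x) → L⁺(y) such that 𝓛_{x,q}^∞ ⊆ 𝓛_{y,h(q)}^∞ for every q ∈ L⁺(x), and h(π(q,t)) = σ(h(q),t) for every q ∈ L⁺(x) and every t ≥ 0. -/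
/-!
For `q` in `L⁺(x)` let `approach π x q` be the filter on the time axis of the times `t → ∞` with
`π(x,t) → q`. Comparability says that `σ(y,·)` converges along every sequence tending to this
filter. Interleaving two such sequences shows that the limit does not depend on the sequence, and
since the filter is countably generated, `σ(y,·)` converges along the filter itself
(`exists_tendsto_of_seq`). The limit is `h q`.

Continuity of `h` is the usual argument for extensions by continuity in a regular space: if `σ(y,t)`
lies in a closed neighbourhood `V` of `h q` whenever `t` is large and `π(x,t)` lies in an open
neighbourhood `U` of `q`, then `h` maps `U ∩ L⁺(x)` into `V`. Equivariance follows by shifting the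
time sequences by `s`.
-/

open Filter Topology
open scoped NNReal

/-- `π` is a semidynamical system on the metric space `Z`. -/
def IsSDS {Z : Type*} [MetricSpace Z] (π : Z → ℝ≥0 → Z) : Prop :=
  Continuous (fun p : Z × ℝ≥0 => π p.1 p.2) ∧ (∀ z, π z 0 = z) ∧
    ∀ z t s, π (π z t) s = π z (t + s)

/-- The positive limit set of a point `x` under `π`. -/
def limitSet {Z : Type*} [MetricSpace Z] (π : Z → ℝ≥0 → Z) (x : Z) : Set Z :=
  {p | ∃ t : ℕ → ℝ≥0, Tendsto t atTop atTop ∧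
    Tendsto (fun n => π x (t n)) atTop (𝓝 p)}

/-- The filter of times `t → ∞` along which `π x t → q`. A sequence tends to it exactly when it
belongs to `𝓛_{x,q}^∞`. -/
def approach {X : Type*} [MetricSpace X] (π : X → ℝ≥0 → X) (x q : X) : Filter ℝ≥0 :=
  comap (π x) (𝓝 q) ⊓ atTop

lemma tendsto_approach {X : Type*} [MetricSpace X] {π : X → ℝ≥0 → X} {x q : X} {t : ℕ → ℝ≥0} :
    Tendsto t atTop (approach π x q) ↔
      Tendsto (fun n => π x (t n)) atTop (𝓝 q) ∧ Tendsto t atTop atTop := by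
  rw [approach, tendsto_inf, tendsto_comap_iff]
  rfl

/-- A function converging, to limits that may a priori differ, along all sequences tending to a
countably generated filter converges along that filter. -/
lemma exists_tendsto_of_seq {A Y : Type*} [MetricSpace Y] {F : Filter A} [F.IsCountablyGenerated]
    [F.NeBot] {f : A → Y}
    (hf : ∀ t : ℕ → A, Tendsto t atTop F → ∃ r, Tendsto (fun n => f (t n)) atTop (𝓝 r)) :
    ∃ r, Tendsto f F (𝓝 r) := by
  obtain ⟨t, ht⟩ := exists_seq_tendsto F
  obtain ⟨a, ha⟩ := hf t ht
  refine ⟨a, tendsto_of_seq_tendsto fun s hs => ?_⟩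
  obtain ⟨b, hb⟩ := hf s hs
  -- The interleaved sequence follows `t` at even indices and `s` at odd ones.
  have hu : Tendsto (fun n => if Even n then t n else s n) atTop F :=
    (ht.mono_left inf_le_left).if (hs.mono_left inf_le_left)
  obtain ⟨r, hr⟩ := hf _ hu
  have even_lim : Tendsto (fun n : ℕ => 2 * n) atTop atTop :=
    tendsto_atTop_mono (fun n => by rw [id]; lia) tendsto_id
  have odd_lim : Tendsto (fun n : ℕ => 2 * n + 1) atTop atTop :=
    tendsto_atTop_mono (fun n => by rw [id]; lia) tendsto_id
  have hra : r = a := by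
    refine tendsto_nhds_unique (hr.comp even_lim) ((ha.comp even_lim).congr fun n => ?_)
    simp
  have hrb : r = b := by
    refine tendsto_nhds_unique (hr.comp odd_lim) ((hb.comp odd_lim).congr fun n => ?_)
    simp
  rw [← hra, hrb]
  exact hb

theorem stmt_3 {X Y : Type*} [MetricSpace X] [MetricSpace Y]
    (π : X → ℝ≥0 → X) (σ : Y → ℝ≥0 → Y) (hπ : IsSDS π) (hσ : IsSDS σ)
    (x : X) (y : Y)
    (hne : (limitSet π x).Nonempty)
    (hcomp : ∀ t : ℕ → ℝ≥0, Tendsto t atTop atTop →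
      (∃ p ∈ limitSet π x, Tendsto (fun n => π x (t n)) atTop (𝓝 p)) →
      ∃ q : Y, Tendsto (fun n => σ y (t n)) atTop (𝓝 q)) :
    ∃ h : X → Y, ContinuousOn h (limitSet π x) ∧
      Set.MapsTo h (limitSet π x) (limitSet σ y) ∧
      (∀ q ∈ limitSet π x, ∀ t : ℕ → ℝ≥0, Tendsto t atTop atTop →
        Tendsto (fun n => π x (t n)) atTop (𝓝 q) →
        Tendsto (fun n => σ y (t n)) atTop (𝓝 (h q))) ∧
      (∀ q ∈ limitSet π x, ∀ s : ℝ≥0, h (π q s) = σ (h q) s) := by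
  obtain ⟨hπc, -, hπa⟩ := hπ
  obtain ⟨hσc, -, hσa⟩ := hσ
  have hcount (q : X) : (approach π x q).IsCountablyGenerated := by
    unfold approach
    infer_instance
  have hneBot (q : X) (hq : q ∈ limitSet π x) : (approach π x q).NeBot := by
    obtain ⟨t, ht, htq⟩ := hq
    exact (tendsto_approach.2 ⟨htq, ht⟩).neBot
  have hex (q : X) : ∃ r : Y, q ∈ limitSet π x → Tendsto (σ y) (approach π x q) (𝓝 r) := by
    by_cases hq : q ∈ limitSet π x
    · have := hneBot q hq
      obtain ⟨r, hr⟩ := exists_tendsto_of_seq (F := approach π x q) (f := σ y) fun t ht =>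
        hcomp t (tendsto_approach.1 ht).2 ⟨q, hq, (tendsto_approach.1 ht).1⟩
      exact ⟨r, fun _ => hr⟩
    · exact ⟨y, fun h => absurd h hq⟩
  choose h hh using hex
  have hseq : ∀ q ∈ limitSet π x, ∀ t : ℕ → ℝ≥0, Tendsto t atTop atTop →
      Tendsto (fun n => π x (t n)) atTop (𝓝 q) →
      Tendsto (fun n => σ y (t n)) atTop (𝓝 (h q)) :=
    fun q hq t ht htq => (hh q hq).comp (tendsto_approach.2 ⟨htq, ht⟩)
  refine ⟨h, fun q hq => ?_, ?_, hseq, ?_⟩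
  · refine (closed_nhds_basis (h q)).tendsto_right_iff.2 ?_
    rintro V ⟨hV, hVc⟩
    obtain ⟨A, hA, B, hB, hAB⟩ := mem_inf_iff_superset.1 (hh q hq hV)
    obtain ⟨U, hU, hUA⟩ := mem_comap.1 hA
    filter_upwards [mem_nhdsWithin_of_mem_nhds (eventually_mem_nhds_iff.2 hU),
      self_mem_nhdsWithin] with p hpU hp
    have := hneBot p hp
    refine hVc.mem_of_tendsto (hh p hp) ?_
    exact mem_of_superset (inter_mem_inf (preimage_mem_comap hpU) hB)
      ((Set.inter_subset_inter_left B hUA).trans hAB)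
  · rintro q ⟨t, ht, htq⟩
    exact ⟨t, ht, hseq q ⟨t, ht, htq⟩ t ht htq⟩
  · rintro q ⟨t, ht, htq⟩ s
    have hts : Tendsto (fun n => t n + s) atTop atTop :=
      tendsto_atTop_mono (fun n => le_self_add) ht
    have hπs : Tendsto (fun n => π x (t n + s)) atTop (𝓝 (π q s)) := by
      simp_rw [← hπa]
      exact ((hπc.comp (Continuous.prodMk_left s)).tendsto q).comp htq
    have hσs : Tendsto (fun n => σ y (t n + s)) atTop (𝓝 (σ (h q) s)) := by
      simp_rw [← hσa]
      exact ((hσc.comp (Continuous.prodMk_left s)).tendsto (h q)).comp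
        (hseq q ⟨t, ht, htq⟩ t ht htq)
    exact tendsto_nhds_unique (hseq _ ⟨_, hts, hπs⟩ _ hts hπs) hσs
end

section
/- Let (X,π) and (Y,σ) be semidynamical systems on metric spaces, let x ∈ X be an almost periodic point and y ∈ Y. If y is strongly comparable with x, then there exists a continuous map h : cl(π⁺(x)) → cl(σ⁺(y)) such that h(π(q,t)) = σ(h(q),t) for every q ∈ cl(π⁺(x)) and every t ≥ 0, and h(x) = y. -/
/-!
Almost periodicity supplies arbitrarily late near-returns of the whole motion `π x`, uniformly in
time, so every point `q` of the orbit closure is a limit of `π x t` along times going to infinity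
(`timeFilter_neBot`). Comparability says that `σ y t` converges along every sequence of such times;
interleaving two sequences shows that the limit depends on `q` only, i.e. `σ y` converges along the
filter of times `t → ∞` with `π x t → q` (`exists_tendsto_of_seq`). The map `h` sends `q` to
this limit. It is continuous because a closed neighbourhood of `h q` that contains `σ y t` at all late
times with `π x t` in an open set `U` contains `h p` for every `p ∈ U` in the orbit closure, and
equivariant because translating times by `s` carries the filter of `q` into
the filter of `π q s`.
-/

open Filter Topology
open scoped NNReal

/-- `x` is an almost periodic point of the semidynamical system `π`. -/
def AlmostPer {Z : Type*} [MetricSpace Z] (π : Z → ℝ≥0 → Z) (x : Z) : Prop :=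
  ∀ ε : ℝ, 0 < ε → ∃ T : ℝ≥0, 0 < T ∧ ∀ α : ℝ≥0, ∃ τ : ℝ≥0,
    α ≤ τ ∧ τ ≤ α + T ∧ 0 < τ ∧ ∀ t : ℝ≥0, dist (π x (t + τ)) (π x t) < ε

/-- The filter of times `t → ∞` along which `f t → q`. -/
def timeFilter {X : Type*} [MetricSpace X] (f : ℝ≥0 → X) (q : X) : Filter ℝ≥0 :=
  atTop ⊓ comap f (𝓝 q)

instance {X : Type*} [MetricSpace X] (f : ℝ≥0 → X) (q : X) :
    (timeFilter f q).IsCountablyGenerated := by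
  unfold timeFilter; infer_instance

lemma tendsto_timeFilter_iff {X ι : Type*} [MetricSpace X] {f : ℝ≥0 → X} {q : X}
    {l : Filter ι} {u : ι → ℝ≥0} :
    Tendsto u l (timeFilter f q) ↔ Tendsto u l atTop ∧ Tendsto (fun i => f (u i)) l (𝓝 q) := by
  simp [timeFilter, tendsto_inf, tendsto_comap_iff, Function.comp_def]

/-- For an almost periodic motion, each point of the orbit closure is also approached at
arbitrarily late times. -/
lemma timeFilter_neBot {X : Type*} [MetricSpace X] {π : X → ℝ≥0 → X} {x : X}
    (hap : AlmostPer π x) {q : X} (hq : q ∈ closure (Set.range (π x))) :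
    (timeFilter (π x) q).NeBot := by
  refine (atTop_basis.inf (Metric.nhds_basis_ball.comap (π x))).neBot_iff.2 ?_
  rintro ⟨N, ε⟩ ⟨-, hε⟩
  have hε2 : (0 : ℝ) < ε / 2 := half_pos hε
  obtain ⟨_, ⟨s, rfl⟩, hs⟩ := Metric.mem_closure_iff.1 hq (ε / 2) hε2
  obtain ⟨T, -, hT⟩ := hap (ε / 2) hε2
  obtain ⟨τ, hNτ, -, -, hτ⟩ := hT N
  refine ⟨s + τ, hNτ.trans le_add_self, ?_⟩
  have h1 := dist_triangle (π x (s + τ)) (π x s) q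
  have h2 := hτ s
  rw [dist_comm] at hs
  simp only [Set.mem_preimage, Metric.mem_ball]
  linarith

/-- If `g` converges along every sequence tending to a countably generated filter, then it
converges along the filter: interleaving shows that all the sequential limits agree. -/
lemma exists_tendsto_of_seq_s5 {α Y : Type*} [MetricSpace Y] {l : Filter α} [l.NeBot]
    [l.IsCountablyGenerated] {g : α → Y}
    (H : ∀ u : ℕ → α, Tendsto u atTop l → ∃ L, Tendsto (fun n => g (u n)) atTop (𝓝 L)) :
    ∃ L, Tendsto g l (𝓝 L) := by
  obtain ⟨u, hu⟩ := exists_seq_tendsto l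
  obtain ⟨L, hL⟩ := H u hu
  refine ⟨L, tendsto_of_seq_tendsto fun v hv => ?_⟩
  have hdiv : Tendsto (fun n : ℕ => n / 2) atTop atTop :=
    Nat.tendsto_div_const_atTop two_ne_zero
  obtain ⟨M, hM⟩ := H (fun n => if Even n then u (n / 2) else v (n / 2))
    (Tendsto.if' (hu.comp hdiv) (hv.comp hdiv))
  have heven : Tendsto (fun n : ℕ => 2 * n) atTop atTop :=
    tendsto_id.const_mul_atTop' two_pos
  have hodd : Tendsto (fun n : ℕ => 2 * n + 1) atTop atTop :=
    tendsto_atTop_mono (fun n => Nat.le_succ _) heven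
  have hMu : Tendsto (fun n => g (u n)) atTop (𝓝 M) := by
    refine (hM.comp heven).congr fun n => ?_
    simp
  have hMv : Tendsto (fun n => g (v n)) atTop (𝓝 M) := by
    refine (hM.comp hodd).congr fun n => ?_
    have h1 : (2 * n + 1) / 2 = n := by omega
    have h2 : ¬ Even (2 * n + 1) := by simp
    simp only [Function.comp_apply, h1, h2, if_false]
  rw [tendsto_nhds_unique hL hMu]
  exact hMv

theorem stmt_5 {X Y : Type*} [MetricSpace X] [MetricSpace Y]
    (π : X → ℝ≥0 → X) (σ : Y → ℝ≥0 → Y) (hπ : IsSDS π) (hσ : IsSDS σ)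
    (x : X) (y : Y) (hap : AlmostPer π x)
    (hsc1 : ∀ t : ℕ → ℝ≥0, Tendsto t atTop atTop →
      Tendsto (fun n => π x (t n)) atTop (𝓝 x) →
      Tendsto (fun n => σ y (t n)) atTop (𝓝 y))
    (hsc2 : ∀ t : ℕ → ℝ≥0, Tendsto t atTop atTop →
      (∃ p : X, Tendsto (fun n => π x (t n)) atTop (𝓝 p)) →
      ∃ q : Y, Tendsto (fun n => σ y (t n)) atTop (𝓝 q)) :
    ∃ h : X → Y, ContinuousOn h (closure (Set.range (π x))) ∧
      Set.MapsTo h (closure (Set.range (π x))) (closure (Set.range (σ y))) ∧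
      (∀ q ∈ closure (Set.range (π x)), ∀ s : ℝ≥0, h (π q s) = σ (h q) s) ∧
      h x = y := by
  obtain ⟨hπc, hπ0, hπa⟩ := hπ
  obtain ⟨hσc, hσ0, hσa⟩ := hσ
  have hlim : ∀ q ∈ closure (Set.range (π x)),
      ∃ L, Tendsto (σ y) (timeFilter (π x) q) (𝓝 L) := by
    intro q hq
    have := timeFilter_neBot hap hq
    refine exists_tendsto_of_seq_s5 fun u hu => ?_
    obtain ⟨h1, h2⟩ := tendsto_timeFilter_iff.1 hu
    exact hsc2 u h1 ⟨q, h2⟩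
  have hxmem : x ∈ closure (Set.range (π x)) := subset_closure ⟨0, hπ0 x⟩
  have : Nonempty Y := ⟨y⟩
  choose! h hh using hlim
  refine ⟨h, ?_, ?_, ?_, ?_⟩
  · intro q hq
    refine (closed_nhds_basis (h q)).tendsto_right_iff.2 ?_
    rintro V ⟨hV, hVc⟩
    -- A late-time set and an open neighbourhood `U` of `q` control `σ y` up to `V`; they belong to
    -- the filter of every `q' ∈ U`, so the limit `h q'` lies in the closed set `V` too.
    obtain ⟨A, hA, B, hB, hAB⟩ := mem_inf_iff_superset.1 (hh q hq hV)
    obtain ⟨W, hW, hWB⟩ := mem_comap.1 hB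
    obtain ⟨U, hUW, hUo, hqU⟩ := mem_nhds_iff.1 hW
    filter_upwards [self_mem_nhdsWithin, mem_nhdsWithin_of_mem_nhds (hUo.mem_nhds hqU)]
      with q' hq' hq'U
    have := timeFilter_neBot hap hq'
    refine hVc.mem_of_tendsto (hh q' hq') ?_
    refine mem_inf_iff_superset.2 ⟨A, hA, π x ⁻¹' U,
      preimage_mem_comap (hUo.mem_nhds hq'U), ?_⟩
    exact fun t ht => hAB ⟨ht.1, hWB (hUW ht.2)⟩
  · intro q hq
    have := timeFilter_neBot hap hq
    exact mem_closure_of_tendsto (hh q hq) (Eventually.of_forall fun t => ⟨t, rfl⟩)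
  · intro q hq s
    have := timeFilter_neBot hap hq
    have hπs : Continuous fun z => π z s := hπc.comp (continuous_id.prodMk continuous_const)
    have hσs : Continuous fun z => σ z s := hσc.comp (continuous_id.prodMk continuous_const)
    obtain ⟨h1, h2⟩ := tendsto_timeFilter_iff.1 (tendsto_id (x := timeFilter (π x) q))
    have hmem : π q s ∈ closure (Set.range (π x)) := by
      refine map_mem_closure (f := fun z => π z s) hπs hq ?_
      rintro _ ⟨t, rfl⟩
      exact ⟨t + s, (hπa x t s).symm⟩
    have hshift : Tendsto (fun t => t + s) (timeFilter (π x) q) (timeFilter (π x) (π q s)) := by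
      refine tendsto_timeFilter_iff.2 ⟨tendsto_atTop_mono (fun t => le_self_add) h1, ?_⟩
      exact ((hπs.tendsto q).comp h2).congr fun t => hπa x t s
    refine tendsto_nhds_unique ((hh _ hmem).comp hshift) ?_
    exact ((hσs.tendsto (h q)).comp (hh q hq)).congr fun t => hσa y t s
  · have := timeFilter_neBot hap hxmem
    obtain ⟨u, hu⟩ := exists_seq_tendsto (timeFilter (π x) x)
    obtain ⟨h1, h2⟩ := tendsto_timeFilter_iff.1 hu
    exact tendsto_nhds_unique ((hh x hxmem).comp hu) (hsc1 u h1 h2)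
end

section
/- Let (X,π) be a semidynamical system on a metric space and x ∈ X. Then the set P_x is positively invariant: if z ∈ P_x and s ≥ 0, then π(z,s) ∈ P_x. -/
/-!
If `π z (t n) → p` then, by continuity of `π · s`, `π z (t n + s) → π p s`. This puts `π z s` into
both limit sets. For the reparametrization, compose the given `g` with the homeomorphism
`u ↦ max (u / (s + 1)) (u - s)` of `[0,∞)` (`delayIso`), which fixes `0` and equals `u - s` for
`u ≥ s + 1`. Since `g t → ∞`, the new time `h t` eventually satisfies `s + h t = g t`, so
`π (π z s) (h t) = π z (g t)` for large `t` and the tracking distance is eventually unchanged.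
-/

open Filter Topology
open scoped NNReal

/-- The set `P_x`: points `z ∈ L⁺(x) ∩ L⁺(z)` whose motion tracks that of `x` up to a
time reparametrization (a homeomorphism `g` of `[0,∞)` with `g 0 = 0`). -/
def Pset {Z : Type*} [MetricSpace Z] (π : Z → ℝ≥0 → Z) (x : Z) : Set Z :=
  {z | z ∈ limitSet π x ∧ z ∈ limitSet π z ∧
    ∃ g : ℝ≥0 ≃ₜ ℝ≥0, g 0 = 0 ∧
      Tendsto (fun t : ℝ≥0 => dist (π x t) (π z (g t))) atTop (𝓝 0)}

/-- The homeomorphism of `[0,∞)` that is linear from `[0, s + 1]` onto `[0, 1]` and is the shift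
`u ↦ u - s` beyond; the two pieces are combined as a maximum (the truncated subtraction only
matters where the first piece is the larger one). -/
noncomputable def delayIso (s : ℝ≥0) : ℝ≥0 ≃ₜ ℝ≥0 where
  toFun u := max (u / (s + 1)) (u - s)
  invFun v := min ((s + 1) * v) (v + s)
  left_inv u := by
    have hs : (0 : ℝ≥0) < s + 1 := by positivity
    rcases le_total u (s + 1) with h | h
    · have h1 : u - s ≤ u / (s + 1) := by
        rw [tsub_le_iff_right, ← NNReal.coe_le_coe]
        have h' : (u : ℝ) ≤ s + 1 := by exact_mod_cast h
        have hs' : (0 : ℝ) < s + 1 := by exact_mod_cast hs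
        push_cast
        rw [← sub_le_iff_le_add, le_div_iff₀ hs']
        nlinarith [s.coe_nonneg]
      have h2 : u ≤ u / (s + 1) + s := tsub_le_iff_right.1 h1
      simp only [max_eq_left h1, mul_div_cancel₀ u hs.ne']
      exact min_eq_left h2
    · have hsu : s ≤ u := le_self_add.trans h
      obtain ⟨w, rfl⟩ := exists_add_of_le hsu
      have hw : 1 ≤ w := by simpa using h
      have h1 : (s + w) / (s + 1) ≤ w := by
        rw [div_le_iff₀ hs, mul_add, mul_one]
        gcongr
        exact le_mul_of_one_le_left' hw
      have h2 : w + s ≤ (s + 1) * w := by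
        rw [add_mul, one_mul, add_comm]
        gcongr
        exact le_mul_of_one_le_right' hw
      simp only [add_tsub_cancel_left, max_eq_right h1, min_eq_right h2]
      exact add_comm w s
  right_inv v := by
    have hs : (0 : ℝ≥0) < s + 1 := by positivity
    rcases le_total v 1 with h | h
    · have h2 : (s + 1) * v ≤ v + s := by
        rw [add_mul, one_mul, add_comm]
        gcongr
        exact mul_le_of_le_one_right' h
      have h1 : (s + 1) * v - s ≤ v := tsub_le_iff_right.2 h2
      simp only [min_eq_left h2]
      rw [mul_div_cancel_left₀ _ hs.ne', max_eq_left h1]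
    · have h2 : v + s ≤ (s + 1) * v := by
        rw [add_mul, one_mul, add_comm]
        gcongr
        exact le_mul_of_one_le_right' h
      have h1 : (v + s) / (s + 1) ≤ v := by
        rwa [div_le_iff₀ hs, mul_comm]
      simp only [min_eq_right h2, add_tsub_cancel_right, max_eq_right h1]
  continuous_toFun := by fun_prop
  continuous_invFun := by fun_prop

lemma delayIso_zero (s : ℝ≥0) : delayIso s 0 = 0 := by
  simp [delayIso]

lemma add_delayIso (s u : ℝ≥0) (h : s + 1 ≤ u) : s + delayIso s u = u := by
  have hs : (0 : ℝ≥0) < s + 1 := by positivity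
  obtain ⟨w, rfl⟩ := exists_add_of_le (le_self_add.trans h : s ≤ u)
  have hw : 1 ≤ w := by simpa using h
  have h1 : (s + w) / (s + 1) ≤ w := by
    rw [div_le_iff₀ hs, mul_add, mul_one]
    gcongr
    exact le_mul_of_one_le_left' hw
  change s + max ((s + w) / (s + 1)) (s + w - s) = s + w
  rw [add_tsub_cancel_left, max_eq_right h1]

lemma tendsto_shift {X : Type*} [MetricSpace X] {π : X → ℝ≥0 → X} (hπ : IsSDS π) {x p : X}
    {t : ℕ → ℝ≥0} (h : Tendsto (fun n => π x (t n)) atTop (𝓝 p)) (s : ℝ≥0) :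
    Tendsto (fun n => π x (t n + s)) atTop (𝓝 (π p s)) := by
  have hc : Continuous (fun y => π y s) :=
    hπ.1.comp (continuous_id.prodMk continuous_const)
  simpa only [Function.comp_def, hπ.2.2] using (hc.tendsto p).comp h

/-- `P_x` is positively invariant. -/
theorem stmt_8 {X : Type*} [MetricSpace X]
    (π : X → ℝ≥0 → X) (hπ : IsSDS π) (x : X) :
    ∀ z ∈ Pset π x, ∀ s : ℝ≥0, π z s ∈ Pset π x := by
  rintro z ⟨⟨t, ht, htz⟩, ⟨r, hr, hrz⟩, g, hg0, hg⟩ s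
  refine ⟨⟨fun n => t n + s, tendsto_atTop_mono (fun n => le_self_add) ht,
    tendsto_shift hπ htz s⟩, ⟨r, hr, ?_⟩, g.trans (delayIso s), ?_, ?_⟩
  · simpa only [hπ.2.2, add_comm s] using tendsto_shift hπ hrz s
  · simp [hg0, delayIso_zero]
  · -- On `[0,∞)` the cocompact filter is `atTop`, and homeomorphisms preserve it.
    have hgt : Tendsto g atTop atTop := by
      simpa only [cocompact_eq_atTop] using g.isClosedEmbedding.tendsto_cocompact
    refine hg.congr' ?_
    filter_upwards [hgt.eventually_ge_atTop (s + 1)] with u hu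
    rw [hπ.2.2, Homeomorph.trans_apply, add_delayIso s _ hu]
end

section
/- Let (X,π) be a semidynamical system on a metric space and let x ∈ X be asymptotically almost periodic, witnessed by an almost periodic point p ∈ X and a time reparametrization g with ρ(π(x,t), π(p,g(t))) → 0 as t → +∞. Then p ∈ P_x; in particular P_x is nonempty. -/
/-!
An almost periodic point `p` is positively recurrent: taking `ε = 1 / (n + 1)`, `α = n` and
`t = 0` in the definition gives return times `τ n ≥ n` with `π p (τ n) → p`, so `p ∈ L⁺(p)`.
The inverse of a time reparametrization `g` tends to infinity, so `x` at the times `g⁻¹ (τ n)`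
is asymptotic to `π p (τ n)`, hence tends to `p`, and `p ∈ L⁺(x)`.
-/

open Filter Topology
open scoped NNReal

/-- A self-homeomorphism of `[0,∞)` is proper, since images of the compact intervals `[0, b]`
are bounded; no monotonicity is needed. -/
lemma tendsto_symm_atTop (g : ℝ≥0 ≃ₜ ℝ≥0) : Tendsto g.symm atTop atTop := by
  refine tendsto_atTop.2 fun b => ?_
  obtain ⟨M, hM⟩ := ((isCompact_Icc (a := 0) (b := b)).image g.continuous).bddAbove
  filter_upwards [eventually_gt_atTop M] with s hs
  by_contra! h
  exact hs.not_ge (hM ⟨g.symm s, ⟨zero_le, h.le⟩, g.apply_symm_apply s⟩)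

lemma AlmostPer.mem_limitSet {X : Type*} [MetricSpace X] {π : X → ℝ≥0 → X} (hπ : IsSDS π)
    {p : X} (hp : AlmostPer π p) : p ∈ limitSet π p := by
  have key : ∀ n : ℕ, ∃ τ : ℝ≥0, (n : ℝ≥0) ≤ τ ∧ dist (π p τ) p < 1 / ((n : ℝ) + 1) := by
    intro n
    obtain ⟨T, -, hT⟩ := hp (1 / ((n : ℝ) + 1)) (by positivity)
    obtain ⟨τ, hτ, -, -, hd⟩ := hT n
    exact ⟨τ, hτ, by simpa [hπ.2.1] using hd 0⟩
  choose τ hτ hd using key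
  refine ⟨τ, tendsto_atTop_mono hτ tendsto_natCast_atTop_atTop, ?_⟩
  rw [tendsto_iff_dist_tendsto_zero]
  exact squeeze_zero (fun _ => dist_nonneg) (fun n => (hd n).le)
    tendsto_one_div_add_atTop_nhds_zero_nat

/-- the almost periodic point witnessing asymptotic almost periodicity of `x`
belongs to `P_x`; in particular `P_x` is nonempty. -/
theorem stmt_9 {X : Type*} [MetricSpace X]
    (π : X → ℝ≥0 → X) (hπ : IsSDS π) (x p : X)
    (hp : AlmostPer π p) (g : ℝ≥0 ≃ₜ ℝ≥0) (hg0 : g 0 = 0)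
    (hasymp : Tendsto (fun t : ℝ≥0 => dist (π x t) (π p (g t))) atTop (𝓝 0)) :
    p ∈ Pset π x ∧ (Pset π x).Nonempty := by
  have hpp := hp.mem_limitSet hπ
  have hmem : p ∈ Pset π x := by
    refine ⟨?_, hpp, g, hg0, hasymp⟩
    obtain ⟨τ, hτ, hlim⟩ := hpp
    have hs := (tendsto_symm_atTop g).comp hτ
    refine ⟨_, hs, ?_⟩
    have h := hasymp.comp hs
    simp only [Function.comp_def, Homeomorph.apply_symm_apply] at h
    rw [tendsto_iff_dist_tendsto_zero] at hlim ⊢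
    refine squeeze_zero (fun _ => dist_nonneg) (fun n => dist_triangle _ (π p (τ n)) _) ?_
    simpa using h.add hlim
  exact ⟨hmem, p, hmem⟩
end

section
/- Let (X,π) and (Y,σ) be semidynamical systems on metric spaces, let x ∈ X be asymptotically almost periodic with cl(π⁺(x)) compact, and let y ∈ Y. Then y is comparable in limit with x if and only if there exists a continuous map h : L⁺(x) → L⁺(y) such that: (a) 𝓛_{x,q}^∞ ⊆ 𝓛_{y,h(q)}^∞ for every q ∈ L⁺(x); (b) h(π(q,t)) = σ(h(q),t) for every q ∈ L⁺(x) and every t ≥ 0; and (c) for every q̃ ∈ P_x and every time reparametrization g with ρ_X(π(x,t), π(q̃,g(t))) → 0 as t → +∞, one has lim_{t→+∞} ρ_Y(σ(y,t), σ(h(q̃), g(t))) = 0. -/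
/-!
If every sequence `t n → ∞` along which `π x (t n)` converges makes `σ y (t n)` converge, then
interleaving two such sequences with the same limit `q` shows that the limit in `Y` depends on `q`
only; this limit is `h q`. Equivalently, `σ y` tends to `h q` along the filter
`atTop ⊓ comap (π x) (𝓝 q)`, and since closed neighbourhoods form a basis in `Y`, this gives the
continuity of `h` on the limit set. Equivariance follows by shifting the sequences by `s`.

For the tracking property (c), take any sequence of times tending to infinity. By compactness
`π x (t n)` tends, after extraction, to some `q`, so `σ y (t n)` tends to `h q`. Tracking gives
`π q' (g (t n)) → q`; these points lie in the invariant set `limitSet π x`, so continuity and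
equivariance of `h` give `σ (h q') (g (t n)) = h (π q' (g (t n))) → h q` as well. The converse
implication is immediate from (a).
-/

open Filter Topology
open scoped NNReal

/-- `x` is asymptotically almost periodic: its motion tracks that of an almost periodic
point up to a time reparametrization. -/
def AsympAP {Z : Type*} [MetricSpace Z] (π : Z → ℝ≥0 → Z) (x : Z) : Prop :=
  ∃ p : Z, AlmostPer π p ∧ ∃ g : ℝ≥0 ≃ₜ ℝ≥0, g 0 = 0 ∧
    Tendsto (fun t : ℝ≥0 => dist (π x t) (π p (g t))) atTop (𝓝 0)

/-- The limit of `v` along a sequence of times depends only on the limit of `u` along it: the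
hypothesis `hc`, applied to the interleaving of two such sequences, forces the limits to agree. -/
lemma limit_unique_of_comparable {X Y : Type*} [MetricSpace X] [MetricSpace Y]
    {u : ℝ≥0 → X} {v : ℝ≥0 → Y}
    (hc : ∀ t : ℕ → ℝ≥0, Tendsto t atTop atTop →
      (∃ p : X, Tendsto (fun n => u (t n)) atTop (𝓝 p)) →
      ∃ q : Y, Tendsto (fun n => v (t n)) atTop (𝓝 q))
    {q : X} {t s : ℕ → ℝ≥0} (ht : Tendsto t atTop atTop) (hs : Tendsto s atTop atTop)
    (htq : Tendsto (fun n => u (t n)) atTop (𝓝 q))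
    (hsq : Tendsto (fun n => u (s n)) atTop (𝓝 q)) {a b : Y}
    (hta : Tendsto (fun n => v (t n)) atTop (𝓝 a))
    (hsb : Tendsto (fun n => v (s n)) atTop (𝓝 b)) : a = b := by
  let w : ℕ → ℝ≥0 := fun n => if Even n then t (n / 2) else s (n / 2)
  have hhalf : Tendsto (fun n : ℕ => n / 2) atTop atTop :=
    Nat.tendsto_div_const_atTop (by norm_num)
  have hw : Tendsto w atTop (atTop ⊓ comap u (𝓝 q)) := by
    have h1 := (tendsto_inf.2 ⟨ht, tendsto_comap_iff.2 htq⟩).comp hhalf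
    have h2 := (tendsto_inf.2 ⟨hs, tendsto_comap_iff.2 hsq⟩).comp hhalf
    exact Tendsto.if' h1 h2
  obtain ⟨c, hwc⟩ := hc w (tendsto_inf.1 hw).1 ⟨q, tendsto_comap_iff.1 (tendsto_inf.1 hw).2⟩
  have he : Tendsto (fun n : ℕ => 2 * n) atTop atTop :=
    tendsto_id.const_mul_atTop' (by norm_num)
  have ho : Tendsto (fun n : ℕ => 2 * n + 1) atTop atTop := tendsto_atTop_mono (fun n => Nat.le_succ _) he
  have hac : a = c := by
    refine tendsto_nhds_unique hta ((hwc.comp he).congr fun n => ?_)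
    simp [w]
  have hbc : b = c := by
    refine tendsto_nhds_unique hsb ((hwc.comp ho).congr fun n => ?_)
    have : (2 * n + 1) / 2 = n := by omega
    simp [w, this]
  rw [hac, hbc]

lemma limitSet_invariant {X : Type*} [MetricSpace X] {π : X → ℝ≥0 → X} (hπ : IsSDS π) {x q : X}
    (hq : q ∈ limitSet π x) (s : ℝ≥0) : π q s ∈ limitSet π x := by
  obtain ⟨t, ht, htq⟩ := hq
  refine ⟨fun n => t n + s, tendsto_atTop_mono (fun n => le_self_add) ht, ?_⟩
  simp only [← hπ.2.2]
  exact ((hπ.1.comp (continuous_id.prodMk continuous_const)).tendsto q).comp htq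

theorem stmt_12 {X Y : Type*} [MetricSpace X] [MetricSpace Y]
    (π : X → ℝ≥0 → X) (σ : Y → ℝ≥0 → Y) (hπ : IsSDS π) (hσ : IsSDS σ)
    (x : X) (y : Y) (hx : AsympAP π x)
    (hcpt : IsCompact (closure (Set.range (π x)))) :
    (∀ t : ℕ → ℝ≥0, Tendsto t atTop atTop →
      (∃ p : X, Tendsto (fun n => π x (t n)) atTop (𝓝 p)) →
      ∃ q : Y, Tendsto (fun n => σ y (t n)) atTop (𝓝 q)) ↔
    (∃ h : X → Y, ContinuousOn h (limitSet π x) ∧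
      Set.MapsTo h (limitSet π x) (limitSet σ y) ∧
      (∀ q ∈ limitSet π x, ∀ t : ℕ → ℝ≥0, Tendsto t atTop atTop →
        Tendsto (fun n => π x (t n)) atTop (𝓝 q) →
        Tendsto (fun n => σ y (t n)) atTop (𝓝 (h q))) ∧
      (∀ q ∈ limitSet π x, ∀ s : ℝ≥0, h (π q s) = σ (h q) s) ∧
      (∀ q' ∈ Pset π x, ∀ g : ℝ≥0 ≃ₜ ℝ≥0, g 0 = 0 →
        Tendsto (fun t : ℝ≥0 => dist (π x t) (π q' (g t))) atTop (𝓝 0) →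
        Tendsto (fun t : ℝ≥0 => dist (σ y t) (σ (h q') (g t))) atTop (𝓝 0))) := by
  constructor
  swap
  · rintro ⟨h, -, -, ha, -, -⟩ t ht ⟨p, hp⟩
    exact ⟨h p, ha p ⟨t, ht, hp⟩ t ht hp⟩
  intro hc
  have hex : ∀ q ∈ limitSet π x, ∃ a : Y, ∀ t : ℕ → ℝ≥0, Tendsto t atTop atTop →
      Tendsto (fun n => π x (t n)) atTop (𝓝 q) →
      Tendsto (fun n => σ y (t n)) atTop (𝓝 a) := by
    rintro q ⟨t, ht, htq⟩
    obtain ⟨a, hta⟩ := hc t ht ⟨q, htq⟩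
    refine ⟨a, fun s hs hsq => ?_⟩
    obtain ⟨b, hsb⟩ := hc s hs ⟨q, hsq⟩
    rwa [limit_unique_of_comparable hc ht hs htq hsq hta hsb]
  have : Nonempty Y := ⟨y⟩
  choose! h ha using hex
  have hF : ∀ q ∈ limitSet π x, Tendsto (σ y) (atTop ⊓ comap (π x) (𝓝 q)) (𝓝 (h q)) := by
    intro q hq
    refine tendsto_of_seq_tendsto fun t ht => ?_
    obtain ⟨h1, h2⟩ := tendsto_inf.1 ht
    exact ha q hq t h1 (tendsto_comap_iff.1 h2)
  have hcont : ContinuousOn h (limitSet π x) := by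
    intro q hq
    refine (closed_nhds_basis (h q)).tendsto_right_iff.2 ?_
    rintro V ⟨hV, hVc⟩
    obtain ⟨A, hA, B, ⟨U, hU, hUB⟩, hAB⟩ := mem_inf_iff_superset.1 (hF q hq hV)
    obtain ⟨O, hOU, hO, hqO⟩ := mem_nhds_iff.1 hU
    filter_upwards [self_mem_nhdsWithin, mem_nhdsWithin_of_mem_nhds (hO.mem_nhds hqO)] with r hr hrO
    obtain ⟨t, ht, htr⟩ := id hr
    refine hVc.mem_of_tendsto (ha r hr t ht htr) ?_
    filter_upwards [ht hA, htr (hO.mem_nhds hrO)] with n hn1 hn2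
    exact hAB ⟨hn1, hUB (hOU hn2)⟩
  have hequiv : ∀ q ∈ limitSet π x, ∀ s : ℝ≥0, h (π q s) = σ (h q) s := by
    intro q hq s
    obtain ⟨t, ht, htq⟩ := id hq
    have hts : Tendsto (fun n => t n + s) atTop atTop := tendsto_atTop_mono (fun n => le_self_add) ht
    have h1 : Tendsto (fun n => π x (t n + s)) atTop (𝓝 (π q s)) := by
      simp only [← hπ.2.2]
      exact ((hπ.1.comp (continuous_id.prodMk continuous_const)).tendsto q).comp htq
    have h2 : Tendsto (fun n => σ y (t n + s)) atTop (𝓝 (σ (h q) s)) := by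
      simp only [← hσ.2.2]
      exact ((hσ.1.comp (continuous_id.prodMk continuous_const)).tendsto (h q)).comp
        (ha q hq t ht htq)
    exact tendsto_nhds_unique (ha _ (limitSet_invariant hπ hq s) _ hts h1) h2
  refine ⟨h, hcont, ?_, ha, hequiv, ?_⟩
  · intro q hq
    obtain ⟨t, ht, htq⟩ := id hq
    exact ⟨t, ht, ha q hq t ht htq⟩
  · rintro q' ⟨hq', -, -⟩ g - hg
    refine tendsto_of_subseq_tendsto fun t ht => ?_
    obtain ⟨q, -, φ, hφ, hφq⟩ := hcpt.tendsto_subseq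
      (x := fun n => π x (t n)) fun n => subset_closure ⟨t n, rfl⟩
    have htφ : Tendsto (fun n => t (φ n)) atTop atTop := ht.comp hφ.tendsto_atTop
    have hq : q ∈ limitSet π x := ⟨_, htφ, hφq⟩
    refine ⟨φ, ?_⟩
    have h1 : Tendsto (fun n => π q' (g (t (φ n)))) atTop (𝓝 q) :=
      hφq.congr_dist (hg.comp htφ)
    have h2 : Tendsto (fun n => h (π q' (g (t (φ n))))) atTop (𝓝 (h q)) :=
      (hcont q hq).tendsto.comp (tendsto_nhdsWithin_iff.2
        ⟨h1, Eventually.of_forall fun n => limitSet_invariant hπ hq' _⟩)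
    simp only [hequiv q' hq'] at h2
    simpa using (ha q hq _ htφ hφq).dist h2
end

section
/- Let (X,π) and (Y,σ) be semidynamical systems on metric spaces with X a complete metric space, and let x ∈ X be asymptotically almost periodic. If y ∈ Y is comparable in limit with x, then y is asymptotically almost periodic (with respect to σ). -/
/-!
Let `x` track the almost periodic point `p` through the reparametrization `g`, and let `M` be the
closure of the orbit of `p`. Almost periodicity makes the orbit of `p` totally bounded, so `M` is
compact (`isCompact_closure_orbit`), and it makes the orbit recurrent, so every point of `M` is a
limit of `π x tₙ` for some `tₙ → ∞` (`limFilter_neBot`).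

Comparability in limit yields a map `h` sending `q = lim π x tₙ` to `lim σ y tₙ`; interlacing two
sequences shows that the value does not depend on `tₙ` (`exists_limit`). The map `h` is continuous
on `M` (`continuousOn_limit`), hence uniformly continuous, and intertwines `π` and `σ`
(`limit_equivariant`). Uniform continuity transports the almost periodicity of `p` to `h p`, and a
subsequence argument in the compact set `M` shows that `σ y t` tracks `h (π p (g t)) = σ (h p) (g t)`,
with the same `g`.
-/

open Filter Topology
open scoped NNReal

/-- The filter of times `t → ∞` along which `π x t → q`. -/
def limFilter {X : Type*} [MetricSpace X] (π : X → ℝ≥0 → X) (x q : X) : Filter ℝ≥0 :=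
  atTop ⊓ comap (π x) (𝓝 q)

instance limFilter_isCountablyGenerated {X : Type*} [MetricSpace X] (π : X → ℝ≥0 → X) (x q : X) :
    (limFilter π x q).IsCountablyGenerated := by
  unfold limFilter; infer_instance

lemma tendsto_limFilter {X ι : Type*} [MetricSpace X] {π : X → ℝ≥0 → X} {x q : X}
    {l : Filter ι} {t : ι → ℝ≥0} :
    Tendsto t l (limFilter π x q) ↔
      Tendsto t l atTop ∧ Tendsto (fun n => π x (t n)) l (𝓝 q) := by
  unfold limFilter
  rw [tendsto_inf, tendsto_comap_iff]
  rfl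

/-- Comparability in limit gives convergence of `σ y` along the whole filter of times at which
`π x` approaches `q`: any two sequences of such times can be interlaced, so they share a limit. -/
lemma exists_limit {X Y : Type*} [MetricSpace X] [MetricSpace Y]
    (π : X → ℝ≥0 → X) (σ : Y → ℝ≥0 → Y) (x : X) (y : Y)
    (hcomp : ∀ t : ℕ → ℝ≥0, Tendsto t atTop atTop →
      (∃ p : X, Tendsto (fun n => π x (t n)) atTop (𝓝 p)) →
      ∃ q : Y, Tendsto (fun n => σ y (t n)) atTop (𝓝 q)) (q : X) :
    ∃ r : Y, Tendsto (σ y) (limFilter π x q) (𝓝 r) := by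
  rcases (limFilter π x q).eq_or_neBot with hbot | hne
  · exact ⟨y, by rw [hbot]; exact tendsto_bot⟩
  have hc : ∀ t : ℕ → ℝ≥0, Tendsto t atTop (limFilter π x q) →
      ∃ r : Y, Tendsto (fun n => σ y (t n)) atTop (𝓝 r) := fun t ht =>
    hcomp t (tendsto_limFilter.1 ht).1 ⟨q, (tendsto_limFilter.1 ht).2⟩
  obtain ⟨t, ht⟩ := exists_seq_tendsto (limFilter π x q)
  obtain ⟨r, hr⟩ := hc t ht
  refine ⟨r, tendsto_of_seq_tendsto fun u hu => ?_⟩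
  obtain ⟨r₁, hr₁⟩ := hc u hu
  have hdiv : Tendsto (fun n : ℕ => n / 2) atTop atTop :=
    Nat.tendsto_div_const_atTop two_ne_zero
  have hv : Tendsto (fun n : ℕ => if Even n then t (n / 2) else u (n / 2)) atTop
      (limFilter π x q) :=
    Tendsto.if' (ht.comp hdiv) (hu.comp hdiv)
  obtain ⟨r₂, hr₂⟩ := hc _ hv
  have he : Tendsto (fun n : ℕ => 2 * n) atTop atTop :=
    tendsto_id.const_mul_atTop' two_pos
  have ho : Tendsto (fun n : ℕ => 2 * n + 1) atTop atTop :=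
    tendsto_atTop_mono (fun n => Nat.le_succ _) he
  have h1 : r₂ = r := by
    refine tendsto_nhds_unique (hr₂.comp he) (hr.congr fun n => ?_)
    simp
  have h2 : r₂ = r₁ := by
    refine tendsto_nhds_unique (hr₂.comp ho) (hr₁.congr fun n => ?_)
    have : (2 * n + 1) / 2 = n := by omega
    simp [this]
  rw [← h1, h2]
  exact hr₁

lemma continuousOn_limit {X Y : Type*} [MetricSpace X] [MetricSpace Y]
    {π : X → ℝ≥0 → X} {σ : Y → ℝ≥0 → Y} {x : X} {y : Y} {h : X → Y}
    (hh : ∀ q, Tendsto (σ y) (limFilter π x q) (𝓝 (h q))) {M : Set X}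
    (hM : ∀ q ∈ M, (limFilter π x q).NeBot) : ContinuousOn h M := by
  intro q _
  rw [ContinuousWithinAt, (closed_nhds_basis (h q)).tendsto_right_iff]
  rintro V ⟨hV, hVc⟩
  have h1 : ∀ᶠ t in limFilter π x q, σ y t ∈ V := hh q hV
  unfold limFilter at h1
  rw [Filter.Eventually, mem_inf_iff_superset] at h1
  obtain ⟨A, hA, B, hB, hAB⟩ := h1
  obtain ⟨U, hU, hUB⟩ := mem_comap.1 hB
  have h2 : ∀ᶠ q' in 𝓝[M] q, U ∈ 𝓝 q' :=
    (eventually_mem_nhds_iff.2 hU).filter_mono nhdsWithin_le_nhds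
  filter_upwards [h2, self_mem_nhdsWithin] with q' hq' hq'M
  have := hM q' hq'M
  refine hVc.mem_of_tendsto (hh q') ?_
  have : A ∩ π x ⁻¹' U ∈ limFilter π x q' := inter_mem_inf hA (preimage_mem_comap hq')
  filter_upwards [this] with t ht using hAB ⟨ht.1, hUB ht.2⟩

lemma limit_equivariant {X Y : Type*} [MetricSpace X] [MetricSpace Y]
    {π : X → ℝ≥0 → X} {σ : Y → ℝ≥0 → Y} (hπ : IsSDS π) (hσ : IsSDS σ) {x : X} {y : Y} {h : X → Y}
    (hh : ∀ q, Tendsto (σ y) (limFilter π x q) (𝓝 (h q))) {q : X}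
    (hq : (limFilter π x q).NeBot) (s : ℝ≥0) : h (π q s) = σ (h q) s := by
  have cπ : Continuous fun z => π z s := hπ.1.comp (by fun_prop : Continuous fun z => (z, s))
  have cσ : Continuous fun z => σ z s := hσ.1.comp (by fun_prop : Continuous fun z => (z, s))
  have hid := tendsto_limFilter.1 (tendsto_id (x := limFilter π x q))
  have hs : Tendsto (fun t => t + s) (limFilter π x q) (limFilter π x (π q s)) := by
    refine tendsto_limFilter.2 ⟨tendsto_atTop_mono (fun t => le_self_add) hid.1, ?_⟩
    refine ((cπ.tendsto q).comp hid.2).congr fun t => ?_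
    exact hπ.2.2 x t s
  refine tendsto_nhds_unique ((hh _).comp hs) (((cσ.tendsto _).comp (hh q)).congr fun t => ?_)
  exact hσ.2.2 y t s

/-- The orbit of an almost periodic point lies within `ε` of its initial segment `[0, T]`, hence is
totally bounded. -/
lemma isCompact_closure_orbit {X : Type*} [MetricSpace X] [CompleteSpace X]
    {π : X → ℝ≥0 → X} (hπ : IsSDS π) {p : X} (hp : AlmostPer π p) :
    IsCompact (closure (Set.range (π p))) := by
  have cπ : Continuous (π p) := hπ.1.comp (by fun_prop : Continuous fun t : ℝ≥0 => (p, t))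
  refine TotallyBounded.isCompact_of_isClosed (TotallyBounded.closure ?_) isClosed_closure
  rw [Metric.totallyBounded_iff]
  intro ε hε
  obtain ⟨T, -, hT⟩ := hp (ε / 2) (half_pos hε)
  have hK : IsCompact (π p '' Set.Icc 0 T) := isCompact_Icc.image cπ
  obtain ⟨S, hSf, hS⟩ := Metric.totallyBounded_iff.1 hK.totallyBounded (ε / 2) (half_pos hε)
  refine ⟨S, hSf, ?_⟩
  rintro _ ⟨t, rfl⟩
  obtain ⟨t', ht', hd⟩ : ∃ t' ∈ Set.Icc 0 T, dist (π p t) (π p t') < ε / 2 := by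
    rcases le_total t T with h | h
    · exact ⟨t, ⟨zero_le, h⟩, by simpa using half_pos hε⟩
    · obtain ⟨τ, h1, h2, -, h3⟩ := hT (t - T)
      rw [tsub_add_cancel_of_le h] at h2
      refine ⟨t - τ, ⟨zero_le, ?_⟩, ?_⟩
      · rw [tsub_le_iff_right] at h1 ⊢
        rwa [add_comm]
      · simpa [tsub_add_cancel_of_le h2] using h3 (t - τ)
  obtain ⟨z, hz, hzd⟩ := Set.mem_iUnion₂.1 (hS ⟨t', ht', rfl⟩)
  refine Set.mem_iUnion₂.2 ⟨z, hz, ?_⟩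
  rw [Metric.mem_ball] at hzd ⊢
  linarith [dist_triangle (π p t) (π p t') z]

/-- Since `p` is recurrent and `x` tracks it, every point of the orbit closure of `p` is a limit
point of `π x t` as `t → ∞`. -/
lemma limFilter_neBot {X : Type*} [MetricSpace X] {π : X → ℝ≥0 → X} {x p : X}
    (hp : AlmostPer π p) (g : ℝ≥0 ≃ₜ ℝ≥0)
    (hg : Tendsto (fun t : ℝ≥0 => dist (π x t) (π p (g t))) atTop (𝓝 0))
    {q : X} (hq : q ∈ closure (Set.range (π p))) : (limFilter π x q).NeBot := by
  have hgs : Tendsto g.symm atTop atTop := by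
    have := g.symm.isClosedEmbedding.tendsto_cocompact
    rwa [cocompact_eq_atTop] at this
  unfold limFilter
  rw [inf_neBot_iff]
  intro A hA B hB
  obtain ⟨U, hU, hUB⟩ := mem_comap.1 hB
  obtain ⟨ε, hε, hεU⟩ := Metric.mem_nhds_iff.1 hU
  obtain ⟨_, ⟨s, rfl⟩, hs⟩ := Metric.mem_closure_iff.1 hq (ε / 3) (by positivity)
  have h1 : ∀ᶠ t in atTop, t ∈ A ∧ dist (π x t) (π p (g t)) < ε / 3 :=
    Filter.Eventually.and hA (hg.eventually (gt_mem_nhds (by positivity)))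
  obtain ⟨α, hα⟩ := eventually_atTop.1 (hgs.eventually h1)
  obtain ⟨T, -, hT⟩ := hp (ε / 3) (by positivity)
  obtain ⟨τ, hτ, -, -, hd⟩ := hT α
  obtain ⟨hmem, hd'⟩ := hα (s + τ) (hτ.trans le_add_self)
  rw [g.apply_symm_apply] at hd'
  refine ⟨g.symm (s + τ), hmem, hUB (hεU ?_)⟩
  rw [Metric.mem_ball]
  have h4 := dist_triangle4 (π x (g.symm (s + τ))) (π p (s + τ)) (π p s) q
  have h5 := hd s
  rw [dist_comm] at hs
  linarith

theorem stmt_13 {X Y : Type*} [MetricSpace X] [MetricSpace Y] [CompleteSpace X]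
    (π : X → ℝ≥0 → X) (σ : Y → ℝ≥0 → Y) (hπ : IsSDS π) (hσ : IsSDS σ)
    (x : X) (y : Y) (hx : AsympAP π x)
    (hcomp : ∀ t : ℕ → ℝ≥0, Tendsto t atTop atTop →
      (∃ p : X, Tendsto (fun n => π x (t n)) atTop (𝓝 p)) →
      ∃ q : Y, Tendsto (fun n => σ y (t n)) atTop (𝓝 q)) :
    AsympAP σ y := by
  obtain ⟨p, hp, g, hg0, hg⟩ := hx
  choose h hh using exists_limit π σ x y hcomp
  have hK := isCompact_closure_orbit hπ hp
  have hne : ∀ q ∈ closure (Set.range (π p)), (limFilter π x q).NeBot :=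
    fun q hq => limFilter_neBot hp g hg hq
  have hcont : ContinuousOn h (closure (Set.range (π p))) := continuousOn_limit hh hne
  have horb : ∀ t, π p t ∈ closure (Set.range (π p)) := fun t => subset_closure ⟨t, rfl⟩
  have hpne : (limFilter π x p).NeBot := by
    have := hne _ (horb 0)
    rwa [hπ.2.1] at this
  have heq : ∀ s, h (π p s) = σ (h p) s := limit_equivariant hπ hσ hh hpne
  refine ⟨h p, ?_, g, hg0, ?_⟩
  · intro ε hε
    obtain ⟨δ, hδ, hu⟩ := Metric.uniformContinuousOn_iff.1
      (hK.uniformContinuousOn_of_continuous hcont) ε hε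
    obtain ⟨T, hT0, hT⟩ := hp δ hδ
    refine ⟨T, hT0, fun α => ?_⟩
    obtain ⟨τ, h1, h2, h3, h4⟩ := hT α
    refine ⟨τ, h1, h2, h3, fun t => ?_⟩
    rw [← heq, ← heq]
    exact hu _ (horb _) _ (horb _) (h4 t)
  · refine tendsto_of_subseq_tendsto fun ns hns => ?_
    obtain ⟨q, hq, φ, hφ, hlim⟩ := hK.tendsto_subseq fun n => horb (g (ns n))
    refine ⟨φ, ?_⟩
    have hns' : Tendsto (fun n => ns (φ n)) atTop atTop := hns.comp hφ.tendsto_atTop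
    have hxq : Tendsto (fun n => π x (ns (φ n))) atTop (𝓝 q) := by
      refine (tendsto_iff_of_dist ?_).2 hlim
      exact hg.comp hns'
    have hy : Tendsto (fun n => σ y (ns (φ n))) atTop (𝓝 (h q)) :=
      (hh q).comp (tendsto_limFilter.2 ⟨hns', hxq⟩)
    have hz : Tendsto (fun n => σ (h p) (g (ns (φ n)))) atTop (𝓝 (h q)) := by
      refine Tendsto.congr (fun n => heq _) ?_
      exact (hcont q hq).tendsto.comp
        (tendsto_nhdsWithin_iff.2 ⟨hlim, Eventually.of_forall fun n => horb _⟩)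
    simpa using hy.dist hz
end

section
/- Let (X,π) and (Y,σ) be semidynamical systems on metric spaces with X a complete metric space, and let x ∈ X be asymptotically stationary, i.e. there exist a stationary point p ∈ X (meaning π(p,t) = p for all t ≥ 0) and a time reparametrization g with ρ_X(π(x,t), π(p,g(t))) → 0 as t → +∞. If y ∈ Y is comparable in limit with x, then y is asymptotically stationary with respect to σ: there exist a point q ∈ Y with σ(q,t) = q for all t ≥ 0 and a time reparametrization g' with ρ_Y(σ(y,t), σ(q,g'(t))) → 0 as t → +∞. -/
/-!
Since `p` is stationary, the hypothesis says that `π x t` converges to `p` as `t → ∞`, so every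
sequence of times tending to infinity lies in the limit class of `x`, hence in that of `y`.
Thus `σ y` converges along every such sequence, and by interleaving
(`exists_tendsto_atTop_of_seq`) it converges to a single point `q`. A limit of a trajectory is
stationary by continuity of `σ`, and then any reparametrization, for instance the identity, works.
-/

open Filter Topology
open scoped NNReal

/-- If `f` converges along every sequence tending to infinity, then all these limits agree:
interleaving a sequence with `n ↦ n` gives a third sequence tending to infinity, whose limit is
shared by both. -/
lemma exists_tendsto_atTop_of_seq {Y : Type*} [TopologicalSpace Y] [T2Space Y] (f : ℝ≥0 → Y)
    (h : ∀ t : ℕ → ℝ≥0, Tendsto t atTop atTop → ∃ q, Tendsto (fun n => f (t n)) atTop (𝓝 q)) :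
    ∃ q, Tendsto f atTop (𝓝 q) := by
  have hcast : Tendsto (fun n : ℕ => (n : ℝ≥0)) atTop atTop := tendsto_natCast_atTop_atTop
  obtain ⟨q, hq⟩ := h _ hcast
  refine ⟨q, tendsto_of_seq_tendsto fun t ht => ?_⟩
  have hhalf : Tendsto (fun n : ℕ => n / 2) atTop atTop :=
    Nat.tendsto_div_const_atTop (by norm_num)
  have hu : Tendsto (fun n : ℕ => if Even n then t (n / 2) else ((n / 2 : ℕ) : ℝ≥0))
      atTop atTop :=
    (ht.comp hhalf).if' (hcast.comp hhalf)
  obtain ⟨r, hr⟩ := h _ hu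
  have heven : Tendsto (fun n : ℕ => 2 * n) atTop atTop :=
    tendsto_id.const_mul_atTop' (by norm_num)
  have hodd : Tendsto (fun n : ℕ => 2 * n + 1) atTop atTop :=
    tendsto_atTop_mono (fun n => Nat.le_succ _) heven
  have h1 : Tendsto (fun n => f (t n)) atTop (𝓝 r) := by
    refine (hr.comp heven).congr fun n => ?_
    simp
  have h2 : Tendsto (fun n : ℕ => f n) atTop (𝓝 r) := by
    refine (hr.comp hodd).congr fun n => ?_
    have hdiv : (2 * n + 1) / 2 = n := by omega
    simp [hdiv]
  rwa [tendsto_nhds_unique hq h2]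

/-- comparability in limit transfers asymptotic stationarity. -/
theorem stmt_14 {X Y : Type*} [MetricSpace X] [MetricSpace Y] [CompleteSpace X]
    (π : X → ℝ≥0 → X) (σ : Y → ℝ≥0 → Y) (hπ : IsSDS π) (hσ : IsSDS σ)
    (x : X) (y : Y)
    (p : X) (hp : ∀ t : ℝ≥0, π p t = p)
    (g : ℝ≥0 ≃ₜ ℝ≥0) (hg0 : g 0 = 0)
    (hasymp : Tendsto (fun t : ℝ≥0 => dist (π x t) (π p (g t))) atTop (𝓝 0))
    (hcomp : ∀ t : ℕ → ℝ≥0, Tendsto t atTop atTop →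
      (∃ p' : X, Tendsto (fun n => π x (t n)) atTop (𝓝 p')) →
      ∃ q : Y, Tendsto (fun n => σ y (t n)) atTop (𝓝 q)) :
    ∃ q : Y, (∀ t : ℝ≥0, σ q t = q) ∧ ∃ g' : ℝ≥0 ≃ₜ ℝ≥0, g' 0 = 0 ∧
      Tendsto (fun t : ℝ≥0 => dist (σ y t) (σ q (g' t))) atTop (𝓝 0) := by
  have hx : Tendsto (π x) atTop (𝓝 p) := by
    rw [tendsto_iff_dist_tendsto_zero]
    simpa only [hp] using hasymp
  obtain ⟨q, hq⟩ := exists_tendsto_atTop_of_seq (σ y) fun t ht => hcomp t ht ⟨p, hx.comp ht⟩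
  have hstat : ∀ t : ℝ≥0, σ q t = q := by
    intro t
    have hcont : Continuous fun z => σ z t :=
      hσ.1.comp (continuous_id.prodMk continuous_const)
    -- `σ y (s + t)` tends to `q` as a shifted trajectory, and to `σ q t` by continuity.
    have h1 : Tendsto (fun s => σ y (s + t)) atTop (𝓝 (σ q t)) :=
      ((hcont.tendsto q).comp hq).congr fun s => hσ.2.2 y s t
    have h2 : Tendsto (fun s => σ y (s + t)) atTop (𝓝 q) :=
      hq.comp (tendsto_atTop_mono (fun s => le_self_add) tendsto_id)
    exact tendsto_nhds_unique h1 h2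
  refine ⟨q, hstat, Homeomorph.refl _, rfl, ?_⟩
  simpa only [hstat] using tendsto_iff_dist_tendsto_zero.1 hq
end

section
/- Let (X,π) and (Y,σ) be semidynamical systems on metric spaces and let h : X → Y be a homomorphism, i.e. h is continuous and h(π(z,t)) = σ(h(z),t) for all z ∈ X and t ≥ 0. Let y ∈ Y and let x ∈ X satisfy h(x) = y and have cl(π⁺(x)) compact. Assume that for each point q ∈ L⁺(y) there is a unique p ∈ X with h(p) = q. Then x is comparable in limit with y: for every sequence (tₙ) in [0,∞) with tₙ → +∞ such that (σ(y,tₙ)) converges in Y, the sequence (π(x,tₙ)) converges in X. -/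
open Filter Topology
open scoped NNReal

theorem stmt_15 {X Y : Type*} [MetricSpace X] [MetricSpace Y]
    (π : X → ℝ≥0 → X) (σ : Y → ℝ≥0 → Y) (hπ : IsSDS π) (hσ : IsSDS σ)
    (h : X → Y) (hcont : Continuous h)
    (hhom : ∀ z : X, ∀ t : ℝ≥0, h (π z t) = σ (h z) t)
    (y : Y) (x : X) (hxy : h x = y)
    (hcpt : IsCompact (closure (Set.range (π x))))
    (huniq : ∀ q ∈ limitSet σ y, ∃! p : X, h p = q) :
    ∀ t : ℕ → ℝ≥0, Tendsto t atTop atTop →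
      (∃ q : Y, Tendsto (fun n => σ y (t n)) atTop (𝓝 q)) →
      ∃ p : X, Tendsto (fun n => π x (t n)) atTop (𝓝 p) := by
  -- By compactness it suffices that all cluster points of `π x (t n)` coincide; each lies over the
  -- limit `q ∈ L⁺(y)` of `σ y (t n)`, whose fibre is a single point.
  rintro t ht ⟨q, hq⟩
  obtain ⟨p, -, hp⟩ := huniq q ⟨t, ht, hq⟩
  refine ⟨p, hcpt.tendsto_nhds_of_unique_mapClusterPt
    (Eventually.of_forall fun n => subset_closure ⟨t n, rfl⟩) fun p' _ hp' => hp p' ?_⟩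
  have hq' : Tendsto (h ∘ fun n => π x (t n)) atTop (𝓝 q) := by
    simpa only [Function.comp_def, hhom, hxy] using hq
  exact eq_of_nhds_neBot
    ((hp'.continuousAt_comp hcont.continuousAt).clusterPt.mono hq')
end
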